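/- Let β > 2 and 0 < κ < 1/2. For every ε > 0 there exist a constant c_ε > 0 and N₀ such that for all even N ≥ N₀ and all admissible pairs (μ₁, μ₂) ∈ A_κ^N, the uniform probability measure ν_N^{μ₁,μ₂} on Ω_N(μ₁,μ₂) satisfies ν_N^{μ₁,μ₂}( |(1/N)∑_{i∈B₁} σᵢ σ_{i+N/2} − (1/2)μ₁μ₂| > ε ) ≤ exp(−c_ε N). -/

import Mathlib

open MeasureTheory Filter

noncomputable section

/-- The spin value ±1 associated to a Boolean. -/
def spinVal (s : Bool) : ℝ := if s then 1 else -1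

/-- A spin configuration on `N = 2n` sites, split into the two blocks
`B₁` (first component) and `B₂` (second component); the perfect matching
pairs the `i`-th spin of `B₁` with the `i`-th spin of `B₂`. -/
abbrev TwoConf (n : ℕ) := (Fin n → Bool) × (Fin n → Bool)

/-- Block magnetization `m₁(σ) = (2/N) ∑_{i ∈ B₁} σᵢ` with `N = 2n`. -/
def mag1 (n : ℕ) (σ : TwoConf n) : ℝ := (2 / (2 * n : ℝ)) * ∑ i, spinVal (σ.1 i)

/-- Block magnetization `m₂(σ) = (2/N) ∑_{i ∈ B₂} σᵢ` with `N = 2n`. -/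
def mag2 (n : ℕ) (σ : TwoConf n) : ℝ := (2 / (2 * n : ℝ)) * ∑ i, spinVal (σ.2 i)

/-- Membership in the typical set `A_κ^N ⊆ [−1,1]²`: the union over sign choices
`s₁, s₂ ∈ {+,−}` of the open squares of half-width `N^{−κ}` centered at
`(m^{s₁}(β/2), m^{s₂}(β/2))`, where `mp = m⁺(β/2)` and `m⁻(β/2) = −mp`. -/
def memTyp (mp κ : ℝ) (N : ℕ) (x : ℝ × ℝ) : Prop :=
  ∃ s₁ s₂ : Bool,
    |x.1 - (if s₁ then mp else -mp)| < (N : ℝ) ^ (-κ) ∧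
    |x.2 - (if s₂ then mp else -mp)| < (N : ℝ) ^ (-κ)

/-- The pair `(μ₁, μ₂)` is admissible for system size `N`: both `N(1+μ₁)/4` and
`N(1+μ₂)/4` are natural numbers. -/
def admissible (N : ℕ) (μ₁ μ₂ : ℝ) : Prop :=
  (∃ k : ℕ, (N : ℝ) * (1 + μ₁) / 4 = k) ∧ ∃ k : ℕ, (N : ℝ) * (1 + μ₂) / 4 = k

/-- The probability of the event `A` under the uniform measure `ν_N^{μ₁,μ₂}` on
`Ω_N(μ₁,μ₂) = {σ : m₁(σ) = μ₁, m₂(σ) = μ₂}` (with `N = 2n`). -/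
def nuProb (n : ℕ) (μ₁ μ₂ : ℝ) (A : Set (TwoConf n)) : ℝ :=
  (∑ σ : TwoConf n,
      ({σ : TwoConf n | mag1 n σ = μ₁ ∧ mag2 n σ = μ₂} ∩ A).indicator
        (fun _ => (1 : ℝ)) σ) /
    ∑ σ : TwoConf n,
      {σ : TwoConf n | mag1 n σ = μ₁ ∧ mag2 n σ = μ₂}.indicator (fun _ => (1 : ℝ)) σ

/-- The expectation of `g` under the uniform measure `ν_N^{μ₁,μ₂}` on
`Ω_N(μ₁,μ₂)` (with `N = 2n`). -/
def nuExp (n : ℕ) (μ₁ μ₂ : ℝ) (g : TwoConf n → ℝ) : ℝ :=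
  (∑ σ : TwoConf n, {σ : TwoConf n | mag1 n σ = μ₁ ∧ mag2 n σ = μ₂}.indicator g σ) /
    ∑ σ : TwoConf n,
      {σ : TwoConf n | mag1 n σ = μ₁ ∧ mag2 n σ = μ₂}.indicator (fun _ => (1 : ℝ)) σ

/-- Number of plus spins. -/
def cntTrue (n : ℕ) (τ : Fin n → Bool) : ℕ := (Finset.univ.filter (fun i => τ i = true)).card

lemma cntTrue_le (n : ℕ) (τ : Fin n → Bool) : cntTrue n τ ≤ n := by
  unfold cntTrue
  exact (Finset.card_le_univ _).trans (by simp)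

lemma sum_spinVal (n : ℕ) (τ : Fin n → Bool) :
    ∑ i, spinVal (τ i) = 2 * (cntTrue n τ : ℝ) - n := by
  have h : ∀ i, spinVal (τ i) = 2 * (if τ i = true then (1 : ℝ) else 0) - 1 := by
    intro i
    unfold spinVal
    split_ifs <;> norm_num
  simp_rw [h]
  rw [Finset.sum_sub_distrib, ← Finset.mul_sum, Finset.sum_boole]
  simp [cntTrue]

lemma card_cnt (n k : ℕ) :
    (Finset.univ.filter (fun τ : Fin n → Bool => cntTrue n τ = k)).card = n.choose k := by
  have h : (Finset.powersetCard k (Finset.univ : Finset (Fin n))).card = n.choose k := by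
    simp
  rw [← h]
  refine Finset.card_nbij' (fun τ => Finset.univ.filter (fun i => τ i = true))
    (fun s i => decide (i ∈ s)) ?_ ?_ ?_ ?_
  · intro τ hτ
    have h1 := (Finset.mem_filter.mp (Finset.mem_coe.mp hτ)).2
    exact Finset.mem_coe.mpr (Finset.mem_powersetCard.mpr ⟨Finset.subset_univ _, h1⟩)
  · intro s hs
    have h1 := (Finset.mem_powersetCard.mp (Finset.mem_coe.mp hs)).2
    refine Finset.mem_coe.mpr (Finset.mem_filter.mpr ⟨Finset.mem_univ _, ?_⟩)
    simpa [cntTrue] using h1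
  · intro τ _
    funext i
    simp
  · intro s _
    ext i
    simp

lemma binom_term_step (n k j : ℕ) :
    n.choose (j + 1) * k ^ (j + 1) * (n - k) ^ (n - (j + 1)) * ((j + 1) * (n - k)) =
      n.choose j * k ^ j * (n - k) ^ (n - j) * ((n - j) * k) := by
  rcases Nat.lt_or_ge j n with hj | hj
  · have h := Nat.choose_succ_right_eq n j
    have e : n - j = (n - (j + 1)) + 1 := by omega
    calc _ = (n.choose (j + 1) * (j + 1)) * (k ^ (j + 1) * (n - k) ^ (n - (j + 1)) * (n - k)) := by
            ring
      _ = (n.choose j * (n - j)) * (k ^ (j + 1) * (n - k) ^ (n - (j + 1) + 1)) := by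
            rw [h]; ring
      _ = _ := by rw [← e]; ring
  · rw [Nat.choose_eq_zero_of_lt (by omega : n < j + 1), Nat.sub_eq_zero_of_le hj]
    simp

lemma binom_mode (n k j : ℕ) (hk : k ≤ n) (hj : j ≤ n) :
    n.choose j * k ^ j * (n - k) ^ (n - j) ≤ n.choose k * k ^ k * (n - k) ^ (n - k) := by
  rcases Nat.eq_zero_or_pos (n - k) with h0 | h0
  · have hkn : k = n := by omega
    subst hkn
    rcases Nat.lt_or_ge j k with h | h
    · rw [h0, zero_pow (by omega)]
      simp
    · have : j = k := by omega
      subst this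
      exact le_rfl
  rcases Nat.eq_zero_or_pos k with hk0 | hk0
  · subst hk0
    rcases Nat.eq_zero_or_pos j with h | h
    · subst h; exact le_rfl
    · rw [zero_pow (by omega)]
      simp
  rcases Nat.le_total j k with h | h
  · -- increasing below k
    induction h using Nat.decreasingInduction with
    | self => exact le_rfl
    | of_succ m hm ih =>
      refine le_trans ?_ (ih (by omega))
      have e := binom_term_step n k m
      have h1 : (m + 1) * (n - k) ≤ (n - m) * k := by
        rw [mul_comm]
        exact Nat.mul_le_mul (by omega) (by omega)
      have h2 : 0 < (m + 1) * (n - k) := by positivity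
      refine Nat.le_of_mul_le_mul_right ?_ h2
      rw [e]
      exact Nat.mul_le_mul le_rfl h1
  · induction j, h using Nat.le_induction with
    | base => exact le_rfl
    | succ m hm ih =>
      refine le_trans ?_ (ih (by omega))
      have e := binom_term_step n k m
      have h1 : (n - m) * k ≤ (m + 1) * (n - k) := by
        rw [mul_comm]
        exact Nat.mul_le_mul (by omega) (by omega)
      have h2 : 0 < (m + 1) * (n - k) := by positivity
      refine Nat.le_of_mul_le_mul_right ?_ h2
      rw [e]
      exact Nat.mul_le_mul le_rfl h1

lemma binom_lower (n k : ℕ) (hk : k ≤ n) :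
    n ^ n ≤ (n + 1) * (n.choose k * k ^ k * (n - k) ^ (n - k)) := by
  have h := add_pow k (n - k) n
  rw [Nat.add_sub_cancel' hk] at h
  calc n ^ n = _ := h
    _ ≤ ∑ j ∈ Finset.range (n + 1), n.choose k * k ^ k * (n - k) ^ (n - k) := by
        refine Finset.sum_le_sum fun j hj => ?_
        have := binom_mode n k j hk (by simpa [Nat.lt_succ_iff] using hj)
        calc _ = n.choose j * k ^ j * (n - k) ^ (n - j) := by simp; ring
          _ ≤ _ := this
    _ = _ := by simp

lemma binom_lower_real (n k : ℕ) (hn : 0 < n) (hk : k ≤ n) :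
    1 ≤ ((n : ℝ) + 1) * (n.choose k * (((k : ℝ) / n) ^ k * (1 - (k : ℝ) / n) ^ (n - k))) := by
  have h : ((n ^ n : ℕ) : ℝ) ≤ _ := Nat.cast_le.mpr (binom_lower n k hk)
  push_cast [Nat.cast_sub hk] at h
  have hn' : (0 : ℝ) < n := by exact_mod_cast hn
  have e1 : 1 - (k : ℝ) / n = (n - k) / n := by field_simp
  rw [e1, div_pow, div_pow, div_mul_div_comm, ← pow_add, Nat.add_sub_cancel' hk,
    ← mul_div_assoc, ← mul_div_assoc, le_div_iff₀ (by positivity)]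
  linarith

/-- Product weight. -/
lemma prod_weight (n : ℕ) (p : ℝ) (τ : Fin n → Bool) :
    ∏ i, (if τ i then p else 1 - p) = p ^ cntTrue n τ * (1 - p) ^ (n - cntTrue n τ) := by
  rw [Finset.prod_ite, Finset.prod_const, Finset.prod_const]
  have h := Finset.card_filter_add_card_filter_not (s := (Finset.univ : Finset (Fin n)))
    (fun i => τ i = true)
  have h' : (Finset.univ.filter (fun i => ¬ (τ i = true))).card = n - cntTrue n τ := by
    unfold cntTrue
    simp only [Finset.card_univ, Fintype.card_fin] at h
    omega
  rw [h']
  rfl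

lemma two_point (p a s : ℝ) (hp0 : 0 ≤ p) (hp1 : p ≤ 1) (ha : |a| ≤ 1) (hs0 : 0 ≤ s)
    (hs : s ≤ 1 / 2) :
    p * Real.exp (s * (a * (1 - (2 * p - 1)))) +
      (1 - p) * Real.exp (s * (a * (-1 - (2 * p - 1)))) ≤ Real.exp (4 * s ^ 2) := by
  have key : ∀ y : ℝ, |y| ≤ 2 →
      Real.exp (s * (a * y)) ≤ 1 + s * (a * y) + 4 * s ^ 2 := by
    intro y hy
    have hay : |a * y| ≤ 2 := by
      rw [abs_mul]
      calc |a| * |y| ≤ 1 * 2 := by gcongr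
        _ = 2 := by norm_num
    have h1 : |s * (a * y)| ≤ s * 2 := by
      rw [abs_mul, abs_of_nonneg hs0]
      gcongr
    have h2 := (abs_le.mp (Real.abs_exp_sub_one_sub_id_le (x := s * (a * y)) (by linarith))).2
    have h3 : (s * (a * y)) ^ 2 ≤ (s * 2) ^ 2 := sq_le_sq' (abs_le.mp h1).1 (abs_le.mp h1).2
    nlinarith
  have k1 := key (1 - (2 * p - 1)) (by rw [abs_le]; constructor <;> linarith)
  have k2 := key (-1 - (2 * p - 1)) (by rw [abs_le]; constructor <;> linarith)
  have k3 := mul_le_mul_of_nonneg_left k1 hp0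
  have k4 := mul_le_mul_of_nonneg_left k2 (by linarith : 0 ≤ 1 - p)
  have k5 := Real.add_one_le_exp (4 * s ^ 2)
  nlinarith

lemma core_bound (n k : ℕ) (hn : 0 < n) (a : Fin n → ℝ) (ha : ∀ i, |a i| ≤ 1)
    (s ε : ℝ) (hs0 : 0 ≤ s) (hs : s ≤ 1 / 2) :
    ((Finset.univ.filter (fun τ : Fin n → Bool => cntTrue n τ = k ∧
        2 * n * ε < ∑ i, a i * (spinVal (τ i) - (2 * ((k : ℝ) / n) - 1)))).card : ℝ) ≤
      (n + 1) * Real.exp (4 * n * s ^ 2 - 2 * n * ε * s) *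
        (Finset.univ.filter (fun τ : Fin n → Bool => cntTrue n τ = k)).card := by
  classical
  by_cases hk : k ≤ n
  swap
  · rw [Finset.filter_false_of_mem]
    · simp only [Finset.card_empty, Nat.cast_zero]; positivity
    · intro τ _ h
      have := cntTrue_le n τ
      omega
  have hn' : (0 : ℝ) < n := by exact_mod_cast hn
  have hkn : (k : ℝ) ≤ n := by exact_mod_cast hk
  set p : ℝ := (k : ℝ) / n with hp
  have hp0 : 0 ≤ p := by positivity
  have hp1 : p ≤ 1 := by rw [hp, div_le_one hn']; exact hkn
  set w0 : ℝ := p ^ k * (1 - p) ^ (n - k) with hw0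
  have hmode : 1 ≤ ((n : ℝ) + 1) * (n.choose k * w0) := binom_lower_real n k hn hk
  have hq : 0 ≤ 1 - p := by linarith
  have hw0nn : 0 ≤ w0 := by positivity
  have hw0pos : 0 < w0 := by
    rcases hw0nn.lt_or_eq with h | h
    · exact h
    · rw [← h] at hmode
      norm_num at hmode
  rw [card_cnt]
  set bad := Finset.univ.filter (fun τ : Fin n → Bool => cntTrue n τ = k ∧
        2 * n * ε < ∑ i, a i * (spinVal (τ i) - (2 * p - 1))) with hbad
  have hw : ∀ τ : Fin n → Bool, 0 ≤ ∏ i, (if τ i then p else 1 - p) := by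
    intro τ
    refine Finset.prod_nonneg fun i _ => ?_
    split_ifs <;> assumption
  have hmgf : ∑ τ : Fin n → Bool, (∏ i, (if τ i then p else 1 - p)) *
      Real.exp (s * ∑ i, a i * (spinVal (τ i) - (2 * p - 1))) ≤ Real.exp (4 * n * s ^ 2) := by
    have e : ∀ τ : Fin n → Bool, (∏ i, (if τ i then p else 1 - p)) *
        Real.exp (s * ∑ i, a i * (spinVal (τ i) - (2 * p - 1))) =
        ∏ i, ((if τ i then p else 1 - p) *
          Real.exp (s * (a i * (spinVal (τ i) - (2 * p - 1))))) := by
      intro τ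
      rw [Finset.mul_sum, Real.exp_sum, Finset.prod_mul_distrib]
    simp_rw [e]
    rw [← Fintype.prod_sum (fun (i : Fin n) (b : Bool) => (if b then p else 1 - p) *
          Real.exp (s * (a i * (spinVal b - (2 * p - 1)))))]
    calc _ ≤ ∏ _i : Fin n, Real.exp (4 * s ^ 2) := by
          refine Finset.prod_le_prod ?_ ?_
          · intro i _
            refine Finset.sum_nonneg fun b _ => ?_
            refine mul_nonneg ?_ (Real.exp_pos _).le
            split_ifs <;> assumption
          · intro i _
            have := two_point p (a i) s hp0 hp1 (ha i) hs0 hs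
            simpa [spinVal] using this
      _ = _ := by
          rw [Finset.prod_const, ← Real.exp_nat_mul]
          congr 1
          simp
          ring
  have hmain : (bad.card : ℝ) * w0 ≤ Real.exp (4 * n * s ^ 2 - 2 * n * ε * s) := by
    calc (bad.card : ℝ) * w0 = ∑ _τ ∈ bad, w0 := by simp
      _ ≤ ∑ τ ∈ bad, ((∏ i, (if τ i then p else 1 - p)) *
            Real.exp (s * ∑ i, a i * (spinVal (τ i) - (2 * p - 1)))) *
              Real.exp (- (2 * n * ε * s)) := by
          refine Finset.sum_le_sum fun τ hτ => ?_
          rw [hbad, Finset.mem_filter] at hτ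
          obtain ⟨_, h1, h2⟩ := hτ
          rw [prod_weight, h1, mul_assoc, ← Real.exp_add]
          refine le_mul_of_one_le_right hw0nn (Real.one_le_exp ?_)
          nlinarith
      _ ≤ ∑ τ : Fin n → Bool, ((∏ i, (if τ i then p else 1 - p)) *
            Real.exp (s * ∑ i, a i * (spinVal (τ i) - (2 * p - 1)))) *
              Real.exp (- (2 * n * ε * s)) := by
          refine Finset.sum_le_sum_of_subset_of_nonneg (Finset.subset_univ _) ?_
          intro τ _ _
          exact mul_nonneg (mul_nonneg (hw τ) (Real.exp_pos _).le) (Real.exp_pos _).le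
      _ ≤ Real.exp (4 * n * s ^ 2) * Real.exp (- (2 * n * ε * s)) := by
          rw [← Finset.sum_mul]
          gcongr
      _ = _ := by rw [← Real.exp_add]; congr 1
  refine le_of_mul_le_mul_right ?_ hw0pos
  calc _ ≤ Real.exp (4 * n * s ^ 2 - 2 * n * ε * s) := hmain
    _ ≤ Real.exp (4 * n * s ^ 2 - 2 * n * ε * s) * (((n : ℝ) + 1) * (n.choose k * w0)) :=
        le_mul_of_one_le_right (Real.exp_pos _).le hmode
    _ = _ := by ring

lemma two_sided (n k : ℕ) (hn : 0 < n) (a : Fin n → ℝ) (ha : ∀ i, |a i| ≤ 1)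
    (s ε : ℝ) (hs0 : 0 ≤ s) (hs : s ≤ 1 / 2) :
    ((Finset.univ.filter (fun τ : Fin n → Bool => cntTrue n τ = k ∧
        2 * n * ε < |∑ i, a i * (spinVal (τ i) - (2 * ((k : ℝ) / n) - 1))|)).card : ℝ) ≤
      2 * (n + 1) * Real.exp (4 * n * s ^ 2 - 2 * n * ε * s) *
        (Finset.univ.filter (fun τ : Fin n → Bool => cntTrue n τ = k)).card := by
  classical
  have h1 := core_bound n k hn a ha s ε hs0 hs
  have h2 := core_bound n k hn (fun i => - a i) (fun i => by rw [abs_neg]; exact ha i) s ε hs0 hs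
  have h3 : (Finset.univ.filter (fun τ : Fin n → Bool => cntTrue n τ = k ∧
        2 * n * ε < |∑ i, a i * (spinVal (τ i) - (2 * ((k : ℝ) / n) - 1))|)) ⊆
      (Finset.univ.filter (fun τ : Fin n → Bool => cntTrue n τ = k ∧
        2 * n * ε < ∑ i, a i * (spinVal (τ i) - (2 * ((k : ℝ) / n) - 1)))) ∪
      (Finset.univ.filter (fun τ : Fin n → Bool => cntTrue n τ = k ∧
        2 * n * ε < ∑ i, (- a i) * (spinVal (τ i) - (2 * ((k : ℝ) / n) - 1)))) := by
    intro τ hτ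
    simp only [Finset.mem_union, Finset.mem_filter, Finset.mem_univ, true_and] at hτ ⊢
    obtain ⟨h, h'⟩ := hτ
    rcases lt_abs.mp h' with h' | h'
    · exact Or.inl ⟨h, h'⟩
    · refine Or.inr ⟨h, ?_⟩
      simpa only [neg_mul, Finset.sum_neg_distrib] using h'
  have h4 : ((Finset.univ.filter (fun τ : Fin n → Bool => cntTrue n τ = k ∧
        2 * n * ε < |∑ i, a i * (spinVal (τ i) - (2 * ((k : ℝ) / n) - 1))|)).card : ℝ) ≤ _ :=
    Nat.cast_le.mpr ((Finset.card_le_card h3).trans (Finset.card_union_le _ _))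
  rw [Nat.cast_add] at h4
  linarith

lemma abs_spinVal (b : Bool) : |spinVal b| ≤ 1 := by
  unfold spinVal
  split_ifs <;> simp

lemma prob_bound (n : ℕ) (hn : 0 < n) (μ₁ μ₂ : ℝ) (hadm : admissible (2 * n) μ₁ μ₂)
    (s ε : ℝ) (hs0 : 0 ≤ s) (hs : s ≤ 1 / 2) :
    nuProb n μ₁ μ₂
              {σ : TwoConf n |
                ε < |(∑ i, spinVal (σ.1 i) * spinVal (σ.2 i)) / ((2 * n : ℕ) : ℝ) -
                  1 / 2 * (μ₁ * μ₂)|} ≤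
      2 * (n + 1) * Real.exp (4 * n * s ^ 2 - 2 * n * ε * s) := by
  classical
  obtain ⟨_, k, hk⟩ := hadm
  have hn' : (0 : ℝ) < n := by exact_mod_cast hn
  have hμ : μ₂ = 2 * ((k : ℝ) / n) - 1 := by
    push_cast at hk
    field_simp
    linarith
  have hm2 : ∀ σ : TwoConf n, mag2 n σ = μ₂ ↔ cntTrue n σ.2 = k := by
    intro σ
    unfold mag2
    rw [sum_spinVal, hμ]
    constructor
    · intro h
      field_simp at h
      have : (cntTrue n σ.2 : ℝ) = k := by linarith
      exact_mod_cast this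
    · intro h
      rw [h]
      field_simp
  unfold nuProb
  refine div_le_of_le_mul₀ ?_ (by positivity) ?_
  · exact Finset.sum_nonneg fun σ _ => Set.indicator_nonneg (fun _ _ => zero_le_one) _
  rw [Fintype.sum_prod_type, Fintype.sum_prod_type, Finset.mul_sum]
  refine Finset.sum_le_sum fun x _ => ?_
  by_cases hx : mag1 n (x, x) = μ₁
  · have hx' : ∀ y, mag1 n (x, y) = μ₁ := fun y => hx
    have hsum : ∑ i, spinVal (x i) = n * μ₁ := by
      rw [← hx]
      unfold mag1
      field_simp
    have e2 : ∑ y, ({σ : TwoConf n | mag1 n σ = μ₁ ∧ mag2 n σ = μ₂}).indicator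
        (fun _ => (1 : ℝ)) (x, y) =
        (Finset.univ.filter (fun τ : Fin n → Bool => cntTrue n τ = k)).card := by
      rw [Finset.card_filter, Nat.cast_sum]
      refine Finset.sum_congr rfl fun y _ => ?_
      simp only [Set.indicator_apply, Set.mem_ofPred_eq, hx', hm2, true_and]
      split_ifs <;> simp
    rw [e2]
    refine le_trans (le_of_eq ?_)
      (two_sided n k hn (fun i => spinVal (x i)) (fun i => abs_spinVal _) s ε hs0 hs)
    rw [Finset.card_filter, Nat.cast_sum]
    refine Finset.sum_congr rfl fun y _ => ?_
    have hiff : (ε < |(∑ i, spinVal (x i) * spinVal (y i)) / ((2 * n : ℕ) : ℝ) -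
                  1 / 2 * (μ₁ * μ₂)|) ↔
        2 * n * ε < |∑ i, spinVal (x i) * (spinVal (y i) - (2 * ((k : ℝ) / n) - 1))| := by
      rw [← hμ]
      have e : ∑ i, spinVal (x i) * (spinVal (y i) - μ₂) =
          2 * n * ((∑ i, spinVal (x i) * spinVal (y i)) / ((2 * n : ℕ) : ℝ) -
                  1 / 2 * (μ₁ * μ₂)) := by
        simp_rw [mul_sub]
        rw [Finset.sum_sub_distrib, ← Finset.sum_mul, hsum]
        push_cast
        field_simp
      rw [e, abs_mul, abs_of_pos (by positivity : (0 : ℝ) < 2 * n)]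
      exact (mul_lt_mul_iff_right₀ (by positivity)).symm
    simp only [Set.indicator_apply, Set.mem_inter_iff, Set.mem_ofPred_eq, hx', hm2, true_and, hiff]
    split_ifs <;> simp
  · have hx' : ∀ y, ¬ mag1 n (x, y) = μ₁ := fun y => hx
    simp [Set.indicator_apply, hx']

/-- Lemma 3.2: for `β > 2` and `0 < κ < 1/2`, for every `ε > 0` there are `c_ε > 0` and
`N₀` such that for all even `N = 2n ≥ N₀` and all admissible `(μ₁, μ₂) ∈ A_κ^N`,
`ν_N^{μ₁,μ₂}(|N⁻¹ ∑_{i∈B₁} σᵢσ_{i+N/2} − μ₁μ₂/2| > ε) ≤ exp(−c_ε N)`. -/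
theorem cross_term_concentration (β κ : ℝ) (hβ : 2 < β) (hκ0 : 0 < κ) (hκ : κ < 1 / 2)
    (mp : ℝ) (hfix : mp = Real.tanh (β / 2 * mp))
    (hmax : ∀ z : ℝ, z = Real.tanh (β / 2 * z) → z ≤ mp) :
    ∀ ε : ℝ, 0 < ε →
      ∃ c : ℝ, 0 < c ∧ ∃ N₀ : ℕ, ∀ n : ℕ, N₀ ≤ 2 * n →
        ∀ μ₁ μ₂ : ℝ, memTyp mp κ (2 * n) (μ₁, μ₂) → admissible (2 * n) μ₁ μ₂ →
          nuProb n μ₁ μ₂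
              {σ : TwoConf n |
                ε < |(∑ i, spinVal (σ.1 i) * spinVal (σ.2 i)) / ((2 * n : ℕ) : ℝ) -
                  1 / 2 * (μ₁ * μ₂)|}
            ≤ Real.exp (-c * ((2 * n : ℕ) : ℝ)) := by
  intro ε hε
  set s : ℝ := min (ε / 4) (1 / 2) with hs
  have hs0 : 0 < s := lt_min (by linarith) (by norm_num)
  have hs1 : s ≤ 1 / 2 := min_le_right _ _
  have hs2 : s ≤ ε / 4 := min_le_left _ _
  have hd : 0 < ε * s / 2 := by positivity
  refine ⟨ε * s / 4, by positivity, ?_⟩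
  have hev : ∀ᶠ n : ℕ in atTop, 2 * ((n : ℝ) + 1) ≤ Real.exp (ε * s / 2 * n) := by
    have ht : Tendsto (fun n : ℕ => ε * s / 2 * (n : ℝ)) atTop atTop :=
      Tendsto.const_mul_atTop hd tendsto_natCast_atTop_atTop
    have h1 := ht.eventually (Real.tendsto_exp_div_pow_atTop 1 |>.eventually_ge_atTop
      (4 / (ε * s / 2)))
    filter_upwards [h1, eventually_ge_atTop 1] with n h1 h2
    have h2' : (1 : ℝ) ≤ n := by exact_mod_cast h2
    rw [pow_one, le_div_iff₀ (by positivity)] at h1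
    have e : 4 / (ε * s / 2) * (ε * s / 2 * n) = 4 * (n : ℝ) := by field_simp
    rw [e] at h1
    linarith
  obtain ⟨M, hM⟩ := eventually_atTop.mp hev
  refine ⟨2 * (M + 1), fun n hn μ₁ μ₂ _ hadm => ?_⟩
  have hb := prob_bound n (by omega) μ₁ μ₂ hadm s ε hs0.le hs1
  refine hb.trans ?_
  have hn0 : (0 : ℝ) ≤ n := Nat.cast_nonneg n
  calc 2 * ((n : ℝ) + 1) * Real.exp (4 * n * s ^ 2 - 2 * n * ε * s)
      ≤ Real.exp (ε * s / 2 * n) * Real.exp (4 * n * s ^ 2 - 2 * n * ε * s) := by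
        gcongr
        exact hM n (by omega)
    _ = Real.exp (ε * s / 2 * n + (4 * n * s ^ 2 - 2 * n * ε * s)) := (Real.exp_add _ _).symm
    _ ≤ _ := by
        refine Real.exp_le_exp.mpr ?_
        push_cast
        have h3 : (n : ℝ) * s * s ≤ n * s * (ε / 4) := by gcongr
        nlinarith

end
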